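/- Let m, n ≥ 2 be integers and let (x, y, θ) be a solution of the self-shrinker profile system on an interval (a, b) with lim_{t→b} (x(t), y(t)) = (0, 0). Then the curve lies on the cone line: √(m−1)·y(t) = √(n−1)·x(t) for all t ∈ (a, b). That is, the only solution of the profile equation passing through the origin is the line y = √((n−1)/(m−1))·x. -/

import Mathlib

open Set Filter Topology

/-- `(x, y, θ)` solves the self-shrinker profile system
`x' = cos θ`, `y' = sin θ`,
`θ' = (x/2 − (m−1)/x)·sin θ + ((n−1)/y − y/2)·cos θ`, with `x, y > 0`, on the set `S`. -/
def SysSol (m n : ℕ) (x y θ : ℝ → ℝ) (S : Set ℝ) : Prop :=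
  ∀ t ∈ S, 0 < x t ∧ 0 < y t ∧
    HasDerivAt x (Real.cos (θ t)) t ∧ HasDerivAt y (Real.sin (θ t)) t ∧
    HasDerivAt θ ((x t / 2 - ((m : ℝ) - 1) / x t) * Real.sin (θ t)
      + (((n : ℝ) - 1) / y t - y t / 2) * Real.cos (θ t)) t

/-!
The first variation of the Gaussian area `F` under dilation of each factor shows that `F x cos θ`
and `F y sin θ` are increasing near the origin, where they vanish. Hence `cos θ` and `sin θ` are
negative there, and comparing the two quantities bounds the slope `q = y / x` of the position vector
above and below and the slope `p = tan θ` of the tangent above. In the time `-log x` the pair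
`(p, q)` solves a small perturbation of the autonomous system of minimal cones, whose only
equilibrium is `p = q = s`, the slope of the cone line. It has a Lyapunov function `V` with
`V' ≥ κ V`, so boundedness as time runs to infinity forces `V = 0` and `q = s` near the origin. The
deviation from the cone line solves a linear second-order equation, so it vanishes on the whole
interval.
-/

section Calculus

lemma monotoneOn_Ioo_of_hasDerivAt_nonneg {f f' : ℝ → ℝ} {a b : ℝ}
    (hf : ∀ t ∈ Ioo a b, HasDerivAt f (f' t) t) (hf' : ∀ t ∈ Ioo a b, 0 ≤ f' t) :
    MonotoneOn f (Ioo a b) := by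
  refine monotoneOn_of_deriv_nonneg (convex_Ioo a b) (HasDerivAt.continuousOn hf) ?_ ?_
  · rw [interior_Ioo]
    exact fun t ht ↦ (hf t ht).differentiableAt.differentiableWithinAt
  · rw [interior_Ioo]
    exact fun t ht ↦ (hf t ht).deriv ▸ hf' t ht

lemma le_of_hasDerivAt_nonneg_of_tendsto {f f' : ℝ → ℝ} {a b L t : ℝ}
    (hf : ∀ t ∈ Ioo a b, HasDerivAt f (f' t) t) (hf' : ∀ t ∈ Ioo a b, 0 ≤ f' t)
    (hL : Tendsto f (𝓝[<] b) (𝓝 L)) (ht : t ∈ Ioo a b) : f t ≤ L := by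
  refine ge_of_tendsto hL ?_
  filter_upwards [Ioo_mem_nhdsLT ht.2] with u hu
  exact monotoneOn_Ioo_of_hasDerivAt_nonneg hf hf' ht ⟨ht.1.trans hu.1, hu.2⟩ hu.1.le

lemma lt_of_hasDerivAt_pos_of_tendsto {f f' : ℝ → ℝ} {a b L t : ℝ}
    (hf : ∀ t ∈ Ioo a b, HasDerivAt f (f' t) t) (hf' : ∀ t ∈ Ioo a b, 0 < f' t)
    (hL : Tendsto f (𝓝[<] b) (𝓝 L)) (ht : t ∈ Ioo a b) : f t < L := by
  have strictMono : StrictMonoOn f (Ioo a b) := by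
    refine strictMonoOn_of_deriv_pos (convex_Ioo a b) (HasDerivAt.continuousOn hf) ?_
    rw [interior_Ioo]
    exact fun t ht ↦ (hf t ht).deriv ▸ hf' t ht
  obtain ⟨u, htu, hub⟩ := exists_between ht.2
  have hu : u ∈ Ioo a b := ⟨ht.1.trans htu, hub⟩
  exact (strictMono ht hu htu).trans_le
    (le_of_hasDerivAt_nonneg_of_tendsto hf (fun t ht ↦ (hf' t ht).le) hL hu)

lemma le_of_hasDerivAt_of_sub_mul_nonneg {f f' : ℝ → ℝ} {s : ℝ}
    (hf : ∀ p, HasDerivAt f (f' p) p) (hf' : ∀ p, 0 ≤ (p - s) * f' p) (p : ℝ) : f s ≤ f p := by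
  have differentiable : Differentiable ℝ f := fun p ↦ (hf p).differentiableAt
  refine isMinOn_univ_of_deriv (hf s).continuousAt differentiable.differentiableOn
    differentiable.differentiableOn (fun r hr ↦ ?_) (fun r hr ↦ ?_) (mem_univ p)
  · rw [(hf r).deriv]
    exact nonpos_of_mul_nonneg_right (hf' r) (sub_neg.2 hr)
  · rw [(hf r).deriv]
    exact nonneg_of_mul_nonneg_right (hf' r) (sub_pos.2 hr)

lemma eqOn_zero_of_hasDerivAt_clm {E : Type*} [NormedAddCommGroup E] [NormedSpace ℝ E]
    {M : ℝ → E →L[ℝ] E} {f : ℝ → E} {a b t₀ : ℝ} (hM : ContinuousOn M (Ioo a b))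
    (hf : ∀ t ∈ Ioo a b, HasDerivAt f (M t (f t)) t) (ht₀ : t₀ ∈ Ioo a b) (h₀ : f t₀ = 0) :
    EqOn f 0 (Ioo a b) := by
  intro t ht
  obtain ⟨c, hac, hc⟩ := exists_between (lt_min ht.1 ht₀.1)
  obtain ⟨d, hd, hdb⟩ := exists_between (max_lt ht.2 ht₀.2)
  have hsub : Icc c d ⊆ Ioo a b := Icc_subset_Ioo hac hdb
  obtain ⟨K, hK⟩ := isCompact_Icc.exists_bound_of_continuousOn (hM.mono hsub)
  have lipschitz : ∀ r ∈ Ioo c d, LipschitzOnWith K.toNNReal (M r) univ := fun r hr ↦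
    ((M r).lipschitz.weaken (NNReal.coe_le_coe.1
      ((hK r (Ioo_subset_Icc_self hr)).trans (Real.le_coe_toNNReal K)))).lipschitzOnWith
  rw [lt_min_iff] at hc
  rw [max_lt_iff] at hd
  exact ODE_solution_unique_of_mem_Ioo lipschitz ⟨hc.2, hd.2⟩
    (fun r hr ↦ ⟨hf r (hsub (Ioo_subset_Icc_self hr)), mem_univ _⟩)
    (fun r _ ↦ ⟨by simp, mem_univ _⟩) h₀ ⟨hc.1, hd.1⟩

lemma eq_zero_of_second_order_linear {f g c d : ℝ → ℝ} {a b t₀ t : ℝ}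
    (hc : ContinuousOn c (Ioo a b)) (hd : ContinuousOn d (Ioo a b))
    (hf : ∀ t ∈ Ioo a b, HasDerivAt f (g t) t)
    (hg : ∀ t ∈ Ioo a b, HasDerivAt g (c t * f t + d t * g t) t)
    (ht₀ : t₀ ∈ Ioo a b) (hf₀ : f t₀ = 0) (hg₀ : g t₀ = 0) (ht : t ∈ Ioo a b) : f t = 0 := by
  let inr := ContinuousLinearMap.inr ℝ ℝ ℝ
  let fst := ContinuousLinearMap.fst ℝ ℝ ℝ
  let snd := ContinuousLinearMap.snd ℝ ℝ ℝ
  let M : ℝ → ℝ × ℝ →L[ℝ] ℝ × ℝ := fun t ↦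
    ContinuousLinearMap.inl ℝ ℝ ℝ ∘L snd + (c t • inr ∘L fst + d t • inr ∘L snd)
  have continuousOn : ContinuousOn M (Ioo a b) := by fun_prop
  have hasDerivAt : ∀ t ∈ Ioo a b, HasDerivAt (fun t ↦ (f t, g t)) (M t (f t, g t)) t := by
    intro t ht
    simpa [M, inr, fst, snd] using (hf t ht).prodMk (hg t ht)
  exact congrArg Prod.fst (eqOn_zero_of_hasDerivAt_clm continuousOn hasDerivAt ht₀
    (Prod.ext hf₀ hg₀) ht)

end Calculus

section Lyapunov

open Real

variable {α s p q : ℝ}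

/-- The primitive of `(p - s) / (1 + p ^ 2)` vanishing at `p = s`: the part of the Lyapunov function
that depends on the slope `p` of the tangent, where `s` is the slope of the cone line. -/
noncomputable def tangentPotential (s p : ℝ) : ℝ :=
  log (1 + p ^ 2) / 2 - s * arctan p - (log (1 + s ^ 2) / 2 - s * arctan s)

/-- The primitive of `1 - s / q` on `q > 0` vanishing at `q = s`: the part of the Lyapunov function
that depends on the slope `q` of the position vector, where `s` is the slope of the cone line. -/
noncomputable def positionPotential (s q : ℝ) : ℝ :=
  q - s - s * log (q / s)

/-- The Lyapunov function of the blown-up profile system, for tangent slope `p`, position slope `q`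
and cone slope `s`. The weight `α * s` makes the cross terms of its derivative cancel. -/
noncomputable def lyapunov (α s p q : ℝ) : ℝ :=
  tangentPotential s p + α * s * positionPotential s q

/-- The derivative of `lyapunov` along a profile curve with respect to the time `-log x`. -/
noncomputable def lyapunovRate (α s x p q : ℝ) : ℝ :=
  (p - s) * (α * p - α * s ^ 2 / q + x ^ 2 * (q - p) / 2) + α * s * (1 - s / q) * (q - p)

lemma hasDerivAt_tangentPotential (s p : ℝ) :
    HasDerivAt (tangentPotential s) ((p - s) / (1 + p ^ 2)) p := by
  have hlog : HasDerivAt (fun p : ℝ ↦ log (1 + p ^ 2)) (2 * p / (1 + p ^ 2)) p := by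
    simpa using ((hasDerivAt_pow 2 p).const_add 1).log (by positivity)
  refine (((hlog.div_const 2).sub ((hasDerivAt_arctan p).const_mul s)).sub_const _).congr_deriv ?_
  field_simp

lemma hasDerivAt_positionPotential (hs : s ≠ 0) (hq : q ≠ 0) :
    HasDerivAt (positionPotential s) (1 - s / q) q := by
  refine (((hasDerivAt_id q).sub_const s).sub
    ((((hasDerivAt_id q).div_const s).log (div_ne_zero hq hs)).const_mul s)).congr_deriv ?_
  simp only [id]
  field_simp

lemma tangentPotential_nonneg (s p : ℝ) : 0 ≤ tangentPotential s p := by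
  have hmin := le_of_hasDerivAt_of_sub_mul_nonneg (hasDerivAt_tangentPotential s)
    (fun p ↦ by rw [← mul_div_assoc, ← sq]; positivity) p
  simpa [tangentPotential] using hmin

lemma tangentPotential_le (s p : ℝ) : tangentPotential s p ≤ (p - s) ^ 2 / 2 := by
  have hderiv (p : ℝ) : HasDerivAt (fun p ↦ (p - s) ^ 2 / 2 - tangentPotential s p)
      ((p - s) * (p ^ 2 / (1 + p ^ 2))) p := by
    refine (((((hasDerivAt_id p).sub_const s).pow 2).div_const 2).sub
      (hasDerivAt_tangentPotential s p)).congr_deriv ?_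
    simp only [id]
    field_simp
    ring
  have hmin := le_of_hasDerivAt_of_sub_mul_nonneg hderiv
    (fun p ↦ by rw [← mul_assoc, ← sq]; positivity) p
  simpa [tangentPotential] using hmin

lemma positionPotential_eq (hs : s ≠ 0) :
    positionPotential s q = s * (q / s - 1 - log (q / s)) := by
  rw [positionPotential]
  field_simp

lemma positionPotential_nonneg (hs : 0 < s) (hq : 0 < q) : 0 ≤ positionPotential s q := by
  rw [positionPotential_eq hs.ne']
  exact mul_nonneg hs.le (sub_nonneg.2 (log_le_sub_one_of_pos (div_pos hq hs)))

lemma eq_of_positionPotential_eq_zero (hs : 0 < s) (hq : 0 < q)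
    (h : positionPotential s q = 0) : q = s := by
  by_contra hne
  have hlt := log_lt_sub_one_of_pos (div_pos hq hs) (by rwa [ne_eq, div_eq_one_iff_eq hs.ne'])
  rw [positionPotential_eq hs.ne'] at h
  exact (mul_pos hs (sub_pos.2 hlt)).ne' h

lemma positionPotential_le (hs : 0 < s) (hq : 0 < q) :
    positionPotential s q ≤ (q - s) ^ 2 / q := by
  rw [positionPotential_eq hs.ne']
  calc s * (q / s - 1 - log (q / s))
      ≤ s * (q / s - 1 - (1 - (q / s)⁻¹)) := by
        gcongr
        exact one_sub_inv_le_log_of_pos (div_pos hq hs)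
    _ = (q - s) ^ 2 / q := by field_simp

lemma lyapunov_nonneg (hα : 0 ≤ α) (hs : 0 < s) (hq : 0 < q) : 0 ≤ lyapunov α s p q :=
  add_nonneg (tangentPotential_nonneg s p)
    (mul_nonneg (mul_nonneg hα hs.le) (positionPotential_nonneg hs hq))

lemma lyapunov_le (hα : 0 ≤ α) (hs : 0 < s) (hq : 0 < q) :
    lyapunov α s p q ≤ (p - s) ^ 2 / 2 + α * s * ((q - s) ^ 2 / q) :=
  add_le_add (tangentPotential_le s p)
    (mul_le_mul_of_nonneg_left (positionPotential_le hs hq) (mul_nonneg hα hs.le))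

lemma eq_of_lyapunov_eq_zero (hα : 0 < α) (hs : 0 < s) (hq : 0 < q)
    (h : lyapunov α s p q = 0) : q = s := by
  have hposition := mul_nonneg (mul_pos hα hs).le (positionPotential_nonneg hs hq)
  refine eq_of_positionPotential_eq_zero hs hq
    ((mul_eq_zero_iff_left (mul_pos hα hs).ne').1 (le_antisymm ?_ hposition))
  rw [lyapunov] at h
  linarith [tangentPotential_nonneg s p]

lemma continuousOn_lyapunov (hs : s ≠ 0) :
    ContinuousOn (fun z : ℝ × ℝ ↦ lyapunov α s z.1 z.2) {z | z.2 ≠ 0} := by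
  have htangent : Continuous (tangentPotential s) :=
    continuous_iff_continuousAt.2 fun p ↦ (hasDerivAt_tangentPotential s p).continuousAt
  have hposition : ContinuousOn (positionPotential s) {q | q ≠ 0} :=
    fun q hq ↦ (hasDerivAt_positionPotential hs hq).continuousAt.continuousWithinAt
  exact (htangent.comp continuous_fst).continuousOn.add
    (continuousOn_const.mul (hposition.comp continuousOn_snd fun _ hz ↦ hz))

lemma exists_lyapunov_le {l m : ℝ} (hs : s ≠ 0) (hl : 0 < l) (hm : 0 ≤ m) :
    ∃ K, ∀ {p q : ℝ}, 0 ≤ p → 0 < q → l ≤ q ^ 2 → q ^ 2 ≤ m → p * q ≤ m →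
      lyapunov α s p q ≤ K := by
  have hrect : Icc 0 (m * (1 + m) / l) ×ˢ Icc (l / (1 + m)) (1 + m) ⊆ {z : ℝ × ℝ | z.2 ≠ 0} :=
    fun z hz ↦ ((by positivity : 0 < l / (1 + m)).trans_le hz.2.1).ne'
  obtain ⟨K, hK⟩ := (isCompact_Icc.prod isCompact_Icc).exists_bound_of_continuousOn
    ((continuousOn_lyapunov (α := α) hs).mono hrect)
  refine ⟨K, fun {p q} hp hq hlq hqm hpq ↦ (le_abs_self _).trans (hK (p, q) ?_)⟩
  have q_le : q ≤ 1 + m := by nlinarith [sq_nonneg (q - 1)]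
  have le_q : l / (1 + m) ≤ q := by
    rw [div_le_iff₀ (by positivity)]
    nlinarith
  have p_le : p ≤ m * (1 + m) / l := by
    rw [le_div_iff₀ hl]
    calc p * l ≤ p * q ^ 2 := by gcongr
      _ = p * q * q := by ring
      _ ≤ m * (1 + m) := by gcongr
  exact ⟨⟨hp, p_le⟩, le_q, q_le⟩

/-- With `P = p - s` and `R = q - s` the rate is `α P² + α s R² / q` plus the perturbation
`x² P (R - P) / 2`, half of the main part at most. -/
lemma min_mul_lyapunov_le_lyapunovRate {x : ℝ} (hα : 0 < α) (hs : 0 < s) (hq : 0 < q)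
    (hx : x ^ 2 ≤ α / 2) (hxq : x ^ 2 * q ≤ α * s) :
    min α (1 / 2) * lyapunov α s p q ≤ lyapunovRate α s x p q := by
  set P := p - s
  set R := q - s
  have rate_eq : lyapunovRate α s x p q =
      α * P ^ 2 + α * s * (R ^ 2 / q) + x ^ 2 / 2 * (P * (R - P)) := by
    simp only [lyapunovRate, P, R]
    field_simp
    ring
  have hP : x ^ 2 * P ^ 2 ≤ α / 2 * P ^ 2 := by gcongr
  have hR : x ^ 2 * R ^ 2 ≤ α * s * (R ^ 2 / q) := by
    rw [← mul_div_assoc, le_div_iff₀ hq, mul_right_comm]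
    gcongr
  have hPR : 0 ≤ x ^ 2 * (P + R) ^ 2 := by positivity
  calc min α (1 / 2) * lyapunov α s p q
      ≤ min α (1 / 2) * (P ^ 2 / 2 + α * s * (R ^ 2 / q)) := by
        gcongr
        exact lyapunov_le hα.le hs hq
    _ = min α (1 / 2) * (P ^ 2 / 2) + min α (1 / 2) * (α * s * (R ^ 2 / q)) := mul_add _ _ _
    _ ≤ α * (P ^ 2 / 2) + 1 / 2 * (α * s * (R ^ 2 / q)) := by
        gcongr
        exacts [min_le_left _ _, min_le_right _ _]
    _ ≤ lyapunovRate α s x p q := by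
        rw [rate_eq]
        linarith [sq_nonneg (x * P), sq_nonneg (x * R)]

end Lyapunov

section ProfileCurves

open Real

/-- Unit-speed solutions on `S` of the profile system with real parameters `α` and `γ` in place of
`m - 1` and `n - 1`. -/
structure IsProfileCurve (α γ : ℝ) (x y θ : ℝ → ℝ) (S : Set ℝ) : Prop where
  x_pos : ∀ t ∈ S, 0 < x t
  y_pos : ∀ t ∈ S, 0 < y t
  hasDerivAt_x : ∀ t ∈ S, HasDerivAt x (cos (θ t)) t
  hasDerivAt_y : ∀ t ∈ S, HasDerivAt y (sin (θ t)) t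
  hasDerivAt_θ : ∀ t ∈ S, HasDerivAt θ
    ((x t / 2 - α / x t) * sin (θ t) + (γ / y t - y t / 2) * cos (θ t)) t

/-- The density of the Gaussian area of the hypersurface generated by a profile curve, up to a
constant: profile curves are the geodesics of the plane metric with this length density. -/
noncomputable def areaDensity (α γ x y : ℝ) : ℝ :=
  x ^ α * y ^ γ * exp (-(x ^ 2 + y ^ 2) / 4)

variable {α γ a b t : ℝ} {x y θ : ℝ → ℝ} {S : Set ℝ}

lemma areaDensity_pos {x y : ℝ} (hx : 0 < x) (hy : 0 < y) : 0 < areaDensity α γ x y := by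
  rw [areaDensity]
  positivity

lemma areaDensity_swap (α γ x y : ℝ) : areaDensity γ α y x = areaDensity α γ x y := by
  simp only [areaDensity]
  ring_nf

lemma SysSol.isProfileCurve {m n : ℕ} (h : SysSol m n x y θ S) :
    IsProfileCurve (m - 1) (n - 1) x y θ S where
  x_pos t ht := (h t ht).1
  y_pos t ht := (h t ht).2.1
  hasDerivAt_x t ht := (h t ht).2.2.1
  hasDerivAt_y t ht := (h t ht).2.2.2.1
  hasDerivAt_θ t ht := (h t ht).2.2.2.2

namespace IsProfileCurve

lemma mono {T : Set ℝ} (h : IsProfileCurve α γ x y θ S) (hT : T ⊆ S) :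
    IsProfileCurve α γ x y θ T where
  x_pos t ht := h.x_pos t (hT ht)
  y_pos t ht := h.y_pos t (hT ht)
  hasDerivAt_x t ht := h.hasDerivAt_x t (hT ht)
  hasDerivAt_y t ht := h.hasDerivAt_y t (hT ht)
  hasDerivAt_θ t ht := h.hasDerivAt_θ t (hT ht)

lemma swap (h : IsProfileCurve α γ x y θ S) :
    IsProfileCurve γ α y x (fun t ↦ π / 2 - θ t) S where
  x_pos := h.y_pos
  y_pos := h.x_pos
  hasDerivAt_x := by simpa only [cos_pi_div_two_sub] using h.hasDerivAt_y
  hasDerivAt_y := by simpa only [sin_pi_div_two_sub] using h.hasDerivAt_x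
  hasDerivAt_θ t ht := by
    refine ((h.hasDerivAt_θ t ht).const_sub (π / 2)).congr_deriv ?_
    rw [sin_pi_div_two_sub, cos_pi_div_two_sub]
    ring

lemma hasDerivAt_areaDensity (h : IsProfileCurve α γ x y θ S) (ht : t ∈ S) :
    HasDerivAt (fun t ↦ areaDensity α γ (x t) (y t))
      (areaDensity α γ (x t) (y t) * (α * cos (θ t) / x t + γ * sin (θ t) / y t
        - (x t * cos (θ t) + y t * sin (θ t)) / 2)) t := by
  have hx := h.x_pos t ht
  have hy := h.y_pos t ht
  have dx := h.hasDerivAt_x t ht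
  have dy := h.hasDerivAt_y t ht
  refine (((dx.rpow_const (.inl hx.ne')).mul (dy.rpow_const (.inl hy.ne'))).mul
    (((dx.pow 2).add (dy.pow 2)).neg.div_const 4).exp).congr_deriv ?_
  simp only [areaDensity, rpow_sub_one hx.ne', rpow_sub_one hy.ne', Pi.mul_apply, Pi.add_apply,
    Pi.pow_apply, Pi.neg_apply]
  field_simp
  ring

/-- First variation of the Gaussian area under dilation of the first factor. -/
lemma hasDerivAt_areaDensity_mul_x_cos (h : IsProfileCurve α γ x y θ S) (ht : t ∈ S) :
    HasDerivAt (fun t ↦ areaDensity α γ (x t) (y t) * (x t * cos (θ t)))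
      (areaDensity α γ (x t) (y t) * (α + cos (θ t) ^ 2 - x t ^ 2 / 2)) t := by
  have hx := (h.x_pos t ht).ne'
  have hy := (h.y_pos t ht).ne'
  refine ((h.hasDerivAt_areaDensity ht).mul
    ((h.hasDerivAt_x t ht).mul (h.hasDerivAt_θ t ht).cos)).congr_deriv ?_
  simp only [Pi.mul_apply]
  field_simp
  linear_combination (y t * (2 * α - x t ^ 2)) * areaDensity α γ (x t) (y t) *
    sin_sq_add_cos_sq (θ t)

lemma hasDerivAt_areaDensity_mul_y_sin (h : IsProfileCurve α γ x y θ S) (ht : t ∈ S) :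
    HasDerivAt (fun t ↦ areaDensity α γ (x t) (y t) * (y t * sin (θ t)))
      (areaDensity α γ (x t) (y t) * (γ + sin (θ t) ^ 2 - y t ^ 2 / 2)) t := by
  simpa only [areaDensity_swap, cos_pi_div_two_sub] using h.swap.hasDerivAt_areaDensity_mul_x_cos ht

lemma hasDerivAt_position_slope (h : IsProfileCurve α γ x y θ S) (ht : t ∈ S)
    (hcos : cos (θ t) ≠ 0) :
    HasDerivAt (fun t ↦ y t / x t) (-cos (θ t) / x t * (y t / x t - tan (θ t))) t := by
  have hx := (h.x_pos t ht).ne'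
  refine ((h.hasDerivAt_y t ht).div (h.hasDerivAt_x t ht) hx).congr_deriv ?_
  rw [tan_eq_sin_div_cos]
  field_simp
  ring

lemma hasDerivAt_tan (h : IsProfileCurve α γ x y θ S) (ht : t ∈ S) (hcos : cos (θ t) ≠ 0) :
    HasDerivAt (fun t ↦ tan (θ t)) (-cos (θ t) / x t * ((1 + tan (θ t) ^ 2) *
      (α * tan (θ t) - γ / (y t / x t) + x t ^ 2 * (y t / x t - tan (θ t)) / 2))) t := by
  have hx := (h.x_pos t ht).ne'
  have hy := (h.y_pos t ht).ne'
  refine ((Real.hasDerivAt_tan hcos).comp t (h.hasDerivAt_θ t ht)).congr_deriv ?_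
  rw [one_div, ← inv_one_add_tan_sq hcos, inv_inv, tan_eq_sin_div_cos]
  field_simp
  ring

lemma hasDerivAt_lyapunov {s : ℝ} (h : IsProfileCurve α γ x y θ S) (ht : t ∈ S)
    (hcos : cos (θ t) ≠ 0) (hs : s ≠ 0) (hγ : γ = α * s ^ 2) :
    HasDerivAt (fun t ↦ lyapunov α s (tan (θ t)) (y t / x t))
      (-cos (θ t) / x t * lyapunovRate α s (x t) (tan (θ t)) (y t / x t)) t := by
  have hq : y t / x t ≠ 0 := (div_pos (h.y_pos t ht) (h.x_pos t ht)).ne'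
  have htangent := (hasDerivAt_tangentPotential s _).comp t (h.hasDerivAt_tan ht hcos)
  have hposition :=
    (hasDerivAt_positionPotential hs hq).comp t (h.hasDerivAt_position_slope ht hcos)
  refine (htangent.add (hposition.const_mul (α * s))).congr_deriv ?_
  have htan : 1 + tan (θ t) ^ 2 ≠ 0 := by positivity
  rw [← mul_assoc (-cos (θ t) / x t) (1 + tan (θ t) ^ 2), mul_comm _ (1 + tan (θ t) ^ 2),
    ← mul_assoc, ← mul_assoc, div_mul_cancel₀ _ htan, lyapunovRate, hγ]
  ring

/-- With `u = r y - k x`, the angular velocity is a linear combination of `u` and `u'`, so that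
`u` solves a linear second-order equation. -/
lemma cone_line_of_tangent_at {r k t₀ : ℝ} (h : IsProfileCurve α γ x y θ (Ioo a b))
    (hα : r ^ 2 = α) (hγ : k ^ 2 = γ) (hr : r ≠ 0) (ht₀ : t₀ ∈ Ioo a b)
    (hposition : r * y t₀ = k * x t₀) (htangent : r * sin (θ t₀) = k * cos (θ t₀))
    (ht : t ∈ Ioo a b) : r * y t = k * x t := by
  have hx : ContinuousOn x (Ioo a b) := HasDerivAt.continuousOn h.hasDerivAt_x
  have hy : ContinuousOn y (Ioo a b) := HasDerivAt.continuousOn h.hasDerivAt_y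
  have hθ : ContinuousOn θ (Ioo a b) := HasDerivAt.continuousOn h.hasDerivAt_θ
  have hy₀ : ∀ t ∈ Ioo a b, y t ≠ 0 := fun t ht ↦ (h.y_pos t ht).ne'
  have hxy₀ : ∀ t ∈ Ioo a b, x t * y t ≠ 0 := fun t ht ↦ mul_ne_zero (h.x_pos t ht).ne' (hy₀ t ht)
  let w : ℝ → ℝ := fun t ↦ r * cos (θ t) + k * sin (θ t)
  let c : ℝ → ℝ := fun t ↦ -cos (θ t) / (2 * r) - r * sin (θ t) / (x t * y t)
  let d : ℝ → ℝ := fun t ↦ x t / (2 * r) - k / y t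
  have hw : ContinuousOn w (Ioo a b) := by fun_prop
  have hc : ContinuousOn c (Ioo a b) := by fun_prop (disch := assumption)
  have hd : ContinuousOn d (Ioo a b) := by fun_prop (disch := assumption)
  have hasDerivAt_tangent : ∀ t ∈ Ioo a b, HasDerivAt (fun t ↦ r * sin (θ t) - k * cos (θ t))
      (w t * c t * (r * y t - k * x t) + w t * d t * (r * sin (θ t) - k * cos (θ t))) t := by
    intro t ht
    have hθt := h.hasDerivAt_θ t ht
    refine ((hθt.sin.const_mul r).sub (hθt.cos.const_mul k)).congr_deriv ?_
    have hxt := (h.x_pos t ht).ne'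
    have hyt := hy₀ t ht
    simp only [w, c, d, ← hα, ← hγ]
    field_simp
    ring
  exact sub_eq_zero.1 (eq_zero_of_second_order_linear (f := fun t ↦ r * y t - k * x t)
    (hw.mul hc) (hw.mul hd)
    (fun t ht ↦ ((h.hasDerivAt_y t ht).const_mul r).sub ((h.hasDerivAt_x t ht).const_mul k))
    hasDerivAt_tangent ht₀ (sub_eq_zero.2 hposition) (sub_eq_zero.2 htangent) ht)

end IsProfileCurve

/-- The last part `(a, b)` of a profile curve that runs into the origin at time `b`, begun so late
that the terms `x / 2` and `y / 2` of the system are dominated by `α / x` and `γ / y`. -/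
structure IsOriginTail (α γ : ℝ) (x y θ : ℝ → ℝ) (a b : ℝ) : Prop
    extends IsProfileCurve α γ x y θ (Ioo a b) where
  α_pos : 0 < α
  γ_pos : 0 < γ
  tendsto_x : Tendsto x (𝓝[<] b) (𝓝 0)
  tendsto_y : Tendsto y (𝓝[<] b) (𝓝 0)
  x_sq_le : ∀ t ∈ Ioo a b, x t ^ 2 ≤ α / 2
  y_sq_le : ∀ t ∈ Ioo a b, y t ^ 2 ≤ γ / 2

lemma IsProfileCurve.exists_isOriginTail (h : IsProfileCurve α γ x y θ (Ioo a b)) (hab : a < b)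
    (hα : 0 < α) (hγ : 0 < γ) (hx : Tendsto x (𝓝[<] b) (𝓝 0)) (hy : Tendsto y (𝓝[<] b) (𝓝 0)) :
    ∃ c ∈ Ico a b, IsOriginTail α γ x y θ c b := by
  have hx' : ∀ᶠ t in 𝓝[<] b, x t ^ 2 < α / 2 :=
    (hx.pow 2).eventually_lt_const (by simpa using hα)
  have hy' : ∀ᶠ t in 𝓝[<] b, y t ^ 2 < γ / 2 :=
    (hy.pow 2).eventually_lt_const (by simpa using hγ)
  obtain ⟨c, hc, hsmall⟩ := (mem_nhdsLT_iff_exists_mem_Ico_Ioo_subset hab).1 (hx'.and hy')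
  exact ⟨c, hc, h.mono (Ioo_subset_Ioo_left hc.1), hα, hγ, hx, hy,
    fun t ht ↦ (hsmall ht).1.le, fun t ht ↦ (hsmall ht).2.le⟩

namespace IsOriginTail

lemma swap (h : IsOriginTail α γ x y θ a b) :
    IsOriginTail γ α y x (fun t ↦ π / 2 - θ t) a b :=
  ⟨h.toIsProfileCurve.swap, h.γ_pos, h.α_pos, h.tendsto_y, h.tendsto_x, h.y_sq_le, h.x_sq_le⟩

lemma tendsto_areaDensity_mul_x_cos (h : IsOriginTail α γ x y θ a b) :
    Tendsto (fun t ↦ areaDensity α γ (x t) (y t) * (x t * cos (θ t))) (𝓝[<] b) (𝓝 0) := by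
  have hdensity := ((h.tendsto_x.rpow_const (.inr h.α_pos.le)).mul
    (h.tendsto_y.rpow_const (.inr h.γ_pos.le))).mul
      (((h.tendsto_x.pow 2).add (h.tendsto_y.pow 2)).neg.div_const 4).rexp
  have hcos := bdd_le_mul_tendsto_zero' 1 (.of_forall fun t ↦ abs_cos_le_one (θ t)) h.tendsto_x
  simpa only [areaDensity, mul_zero, mul_comm (cos _)] using hdensity.mul hcos

lemma tendsto_areaDensity_mul_y_sin (h : IsOriginTail α γ x y θ a b) :
    Tendsto (fun t ↦ areaDensity α γ (x t) (y t) * (y t * sin (θ t))) (𝓝[<] b) (𝓝 0) := by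
  simpa only [areaDensity_swap, cos_pi_div_two_sub] using h.swap.tendsto_areaDensity_mul_x_cos

lemma cos_neg (h : IsOriginTail α γ x y θ a b) (ht : t ∈ Ioo a b) : cos (θ t) < 0 := by
  have hneg := lt_of_hasDerivAt_pos_of_tendsto
    (fun t ht ↦ h.hasDerivAt_areaDensity_mul_x_cos ht)
    (fun t ht ↦ mul_pos (areaDensity_pos (h.x_pos t ht) (h.y_pos t ht))
      (by nlinarith [h.α_pos, h.x_sq_le t ht]))
    h.tendsto_areaDensity_mul_x_cos ht
  exact neg_of_mul_neg_right (neg_of_mul_neg_right hneg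
    (areaDensity_pos (h.x_pos t ht) (h.y_pos t ht)).le) (h.x_pos t ht).le

lemma sin_neg (h : IsOriginTail α γ x y θ a b) (ht : t ∈ Ioo a b) : sin (θ t) < 0 := by
  simpa only [cos_pi_div_two_sub] using h.swap.cos_neg ht

lemma y_sin_le (h : IsOriginTail α γ x y θ a b) (ht : t ∈ Ioo a b) :
    y t * sin (θ t) ≤ γ / (2 * (α + 1)) * (x t * cos (θ t)) := by
  have hα := h.α_pos
  have hγ := h.γ_pos
  have hderiv_nonneg : ∀ t ∈ Ioo a b, 0 ≤ areaDensity α γ (x t) (y t)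
        * (γ + sin (θ t) ^ 2 - y t ^ 2 / 2)
      - γ / (2 * (α + 1)) * (areaDensity α γ (x t) (y t)
        * (α + cos (θ t) ^ 2 - x t ^ 2 / 2)) := by
    intro t ht
    have hcomparison : γ / (2 * (α + 1)) * (α + cos (θ t) ^ 2 - x t ^ 2 / 2)
        ≤ γ + sin (θ t) ^ 2 - y t ^ 2 / 2 :=
      calc γ / (2 * (α + 1)) * (α + cos (θ t) ^ 2 - x t ^ 2 / 2)
          ≤ γ / (2 * (α + 1)) * (α + 1) := by
            gcongr
            linarith [cos_sq_le_one (θ t), sq_nonneg (x t)]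
        _ = γ / 2 := by field_simp
        _ ≤ γ + sin (θ t) ^ 2 - y t ^ 2 / 2 := by
            linarith [h.y_sq_le t ht, sq_nonneg (sin (θ t))]
    rw [mul_left_comm, ← mul_sub]
    exact mul_nonneg (areaDensity_pos (h.x_pos t ht) (h.y_pos t ht)).le (sub_nonneg.2 hcomparison)
  have hnonpos := le_of_hasDerivAt_nonneg_of_tendsto
    (fun t ht ↦ (h.hasDerivAt_areaDensity_mul_y_sin ht).sub
      ((h.hasDerivAt_areaDensity_mul_x_cos ht).const_mul (γ / (2 * (α + 1)))))
    hderiv_nonneg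
    (h.tendsto_areaDensity_mul_y_sin.sub (h.tendsto_areaDensity_mul_x_cos.const_mul _)) ht
  simp only [Pi.sub_apply, mul_zero, sub_zero] at hnonpos
  rw [mul_left_comm (γ / _), ← mul_sub] at hnonpos
  exact sub_nonpos.1 (nonpos_of_mul_nonpos_right hnonpos
    (areaDensity_pos (h.x_pos t ht) (h.y_pos t ht)))

lemma mul_x_sq_le (h : IsOriginTail α γ x y θ a b) (ht : t ∈ Ioo a b) :
    γ / (2 * (α + 1)) * x t ^ 2 ≤ y t ^ 2 := by
  have hnonpos := le_of_hasDerivAt_nonneg_of_tendsto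
    (fun t ht ↦ (((h.hasDerivAt_x t ht).pow 2).const_mul (γ / (2 * (α + 1)))).sub
      ((h.hasDerivAt_y t ht).pow 2))
    (fun t ht ↦ by
      simp only [Nat.cast_ofNat, Nat.add_one_sub_one, pow_one]
      linarith [h.y_sin_le ht])
    (((h.tendsto_x.pow 2).const_mul _).sub (h.tendsto_y.pow 2)) ht
  simpa using hnonpos

lemma tan_pos (h : IsOriginTail α γ x y θ a b) (ht : t ∈ Ioo a b) : 0 < tan (θ t) := by
  rw [tan_eq_sin_div_cos]
  exact div_pos_of_neg_of_neg (h.sin_neg ht) (h.cos_neg ht)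

lemma position_slope_pos (h : IsOriginTail α γ x y θ a b) (ht : t ∈ Ioo a b) : 0 < y t / x t :=
  div_pos (h.y_pos t ht) (h.x_pos t ht)

lemma le_position_slope_sq (h : IsOriginTail α γ x y θ a b) (ht : t ∈ Ioo a b) :
    γ / (2 * (α + 1)) ≤ (y t / x t) ^ 2 := by
  have hx := h.x_pos t ht
  rw [div_pow, le_div_iff₀ (by positivity)]
  exact h.mul_x_sq_le ht

lemma position_slope_sq_le (h : IsOriginTail α γ x y θ a b) (ht : t ∈ Ioo a b) :
    (y t / x t) ^ 2 ≤ 2 * (γ + 1) / α := by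
  have hα := h.α_pos
  have hγ := h.γ_pos
  rw [← inv_div (x t), ← inv_div α, inv_pow]
  exact inv_anti₀ (by positivity) (h.swap.le_position_slope_sq ht)

lemma tan_mul_position_slope_le (h : IsOriginTail α γ x y θ a b) (ht : t ∈ Ioo a b) :
    tan (θ t) * (y t / x t) ≤ 2 * (γ + 1) / α := by
  have hα := h.α_pos
  have hγ := h.γ_pos
  have hle : x t * cos (θ t) ≤ α / (2 * (γ + 1)) * (y t * sin (θ t)) := by
    simpa only [cos_pi_div_two_sub, sin_pi_div_two_sub] using h.swap.y_sin_le ht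
  rw [tan_eq_sin_div_cos, div_mul_div_comm,
    div_le_iff_of_neg (mul_neg_of_neg_of_pos (h.cos_neg ht) (h.x_pos t ht)), ← inv_div α,
    inv_mul_le_iff₀ (by positivity)]
  linarith

lemma x_sq_mul_position_slope_le {s : ℝ} (h : IsOriginTail α γ x y θ a b) (hs : 0 < s)
    (hγ : γ = α * s ^ 2) (ht : t ∈ Ioo a b) : x t ^ 2 * (y t / x t) ≤ α * s := by
  have hx := (h.x_pos t ht).ne'
  have hxy : x t ^ 2 * (y t / x t) = x t * y t := by field_simp
  have hx_sq : s ^ 2 * x t ^ 2 ≤ s ^ 2 * (α / 2) := by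
    gcongr
    exact h.x_sq_le t ht
  have hy_sq := h.y_sq_le t ht
  rw [hxy, ← mul_le_mul_iff_of_pos_left hs]
  nlinarith [sq_nonneg (s * x t - y t), mul_pos h.α_pos (pow_pos hs 2)]

/-- In the time `τ = -log x` the Lyapunov function `V` satisfies `V' ≥ κ V`, so that
`x ^ κ * V = e ^ (-κ τ) * V` is nondecreasing; as `V` is bounded, it tends to `0`. -/
lemma lyapunov_eq_zero {s : ℝ} (h : IsOriginTail α γ x y θ a b) (hs : 0 < s)
    (hγ : γ = α * s ^ 2) (ht : t ∈ Ioo a b) : lyapunov α s (tan (θ t)) (y t / x t) = 0 := by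
  have hα := h.α_pos
  set V : ℝ → ℝ := fun t ↦ lyapunov α s (tan (θ t)) (y t / x t)
  set κ := min α (1 / 2)
  have hκ : 0 < κ := by positivity
  have V_nonneg : ∀ t ∈ Ioo a b, 0 ≤ V t := fun t ht ↦
    lyapunov_nonneg hα.le hs (h.position_slope_pos ht)
  have hderiv : ∀ t ∈ Ioo a b, HasDerivAt (fun t ↦ x t ^ κ * V t) (x t ^ κ * (-cos (θ t) / x t) *
      (lyapunovRate α s (x t) (tan (θ t)) (y t / x t) - κ * V t)) t := by
    intro t ht
    have hx := (h.x_pos t ht).ne'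
    refine (((h.hasDerivAt_x t ht).rpow_const (.inl hx)).mul
      (h.hasDerivAt_lyapunov ht (h.cos_neg ht).ne hs.ne' hγ)).congr_deriv ?_
    rw [rpow_sub_one hx]
    ring
  have hderiv_nonneg : ∀ t ∈ Ioo a b, 0 ≤ x t ^ κ * (-cos (θ t) / x t) *
      (lyapunovRate α s (x t) (tan (θ t)) (y t / x t) - κ * V t) := fun t ht ↦
    mul_nonneg (mul_nonneg (rpow_nonneg (h.x_pos t ht).le κ)
      (div_nonneg (neg_nonneg.2 (h.cos_neg ht).le) (h.x_pos t ht).le))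
      (sub_nonneg.2 (min_mul_lyapunov_le_lyapunovRate hα hs (h.position_slope_pos ht)
        (h.x_sq_le t ht) (h.x_sq_mul_position_slope_le hs hγ ht)))
  have hlim : Tendsto (fun t ↦ x t ^ κ * V t) (𝓝[<] b) (𝓝 0) := by
    have hγ₀ := h.γ_pos
    obtain ⟨K, hK⟩ := exists_lyapunov_le (α := α) (l := γ / (2 * (α + 1)))
      (m := 2 * (γ + 1) / α) hs.ne' (by positivity) (by positivity)
    have hbound : ∀ᶠ t in 𝓝[<] b, |V t| ≤ K := by
      filter_upwards [Ioo_mem_nhdsLT (ht.1.trans ht.2)] with t ht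
      rw [abs_of_nonneg (V_nonneg t ht)]
      exact hK (h.tan_pos ht).le (h.position_slope_pos ht) (h.le_position_slope_sq ht)
        (h.position_slope_sq_le ht) (h.tan_mul_position_slope_le ht)
    simpa only [mul_comm] using
      bdd_le_mul_tendsto_zero' K hbound (h.tendsto_x.rpow_const_nhds_zero hκ)
  have hnonpos := le_of_hasDerivAt_nonneg_of_tendsto hderiv hderiv_nonneg hlim ht
  exact le_antisymm (nonpos_of_mul_nonpos_right hnonpos (rpow_pos_of_pos (h.x_pos t ht) κ))
    (V_nonneg t ht)

lemma cone_line (h : IsOriginTail α γ x y θ a b) (ht : t ∈ Ioo a b) :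
    √α * y t = √γ * x t := by
  have hα := h.α_pos
  have hγ := h.γ_pos
  have hs : 0 < √γ / √α := by positivity
  have hs_sq : γ = α * (√γ / √α) ^ 2 := by
    rw [div_pow, sq_sqrt hα.le, sq_sqrt hγ.le]
    field_simp
  have hslope := eq_of_lyapunov_eq_zero hα hs (h.position_slope_pos ht)
    (h.lyapunov_eq_zero hs hs_sq ht)
  rw [div_eq_div_iff (h.x_pos t ht).ne' (sqrt_pos.2 hα).ne'] at hslope
  rwa [mul_comm]

end IsOriginTail

theorem sol_through_origin_is_cone_line_general (hα : 0 < α) (hγ : 0 < γ)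
    (h : IsProfileCurve α γ x y θ (Ioo a b))
    (hlim : Tendsto (fun t ↦ (x t, y t)) (𝓝[Ioo a b] b) (𝓝 (0, 0))) :
    ∀ t ∈ Ioo a b, √α * y t = √γ * x t := by
  intro t ht
  have hab : a < b := ht.1.trans ht.2
  rw [nhdsWithin_Ioo_eq_nhdsLT hab] at hlim
  obtain ⟨c, hc, htail⟩ := h.exists_isOriginTail hab hα hγ hlim.fst_nhds hlim.snd_nhds
  obtain ⟨u, hu⟩ : (Ioo c b).Nonempty := nonempty_Ioo.2 hc.2
  have hu' : u ∈ Ioo a b := Ioo_subset_Ioo_left hc.1 hu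
  have htangent : √α * sin (θ u) = √γ * cos (θ u) :=
    ((h.hasDerivAt_y u hu').const_mul √α).unique
      (((h.hasDerivAt_x u hu').const_mul √γ).congr_of_eventuallyEq
        (eventually_of_mem (isOpen_Ioo.mem_nhds hu) fun _ ↦ htail.cone_line))
  exact h.cone_line_of_tangent_at (sq_sqrt hα.le) (sq_sqrt hγ.le) (sqrt_pos.2 hα).ne' hu'
    (htail.cone_line hu) htangent ht

end ProfileCurves

/-- any solution of the self-shrinker profile system on `(a, b)` with
`(x(t), y(t)) → (0, 0)` as `t → b` lies on the cone line
`√(m−1)·y = √(n−1)·x`, i.e. the only solution through the origin is the line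
`y = √((n−1)/(m−1))·x`. -/
theorem sol_through_origin_is_cone_line (m n : ℕ) (hm : 2 ≤ m) (hn : 2 ≤ n)
    (a b : ℝ) (hab : a < b) (x y θ : ℝ → ℝ)
    (hsol : SysSol m n x y θ (Ioo a b))
    (hlim : Tendsto (fun t => (x t, y t)) (𝓝[Ioo a b] b) (𝓝 ((0 : ℝ), (0 : ℝ)))) :
    ∀ t ∈ Ioo a b, Real.sqrt ((m : ℝ) - 1) * y t = Real.sqrt ((n : ℝ) - 1) * x t :=
  sol_through_origin_is_cone_line_general (sub_pos.2 (Nat.one_lt_cast.2 hm))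
    (sub_pos.2 (Nat.one_lt_cast.2 hn)) hsol.isProfileCurve hlim
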